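/- arXiv:1902.09181 — 2 statements merged into one kernel-verified Lean document; each statement's English description precedes it below -/
import Mathlib

section
/- Let φ = f + g, where f : ℝ^n → ℝ is L-smooth and μ-strongly convex with 0 < μ ≤ L, and g : ℝ^n → (-∞,+∞] is proper, closed and convex. Let 0 < t ≤ 1/L with μt < 1, and let x⁺ = x - t·𝒢_t(x) be one step of the proximal gradient method from x. Then the refined sufficient decrease property holds: φ(x) ≥ φ(x⁺) + (t/2)‖𝒢_t(x)‖² + (t/(2(1 - μt)))‖𝒢_t(x⁺)‖². -/
/-!
Write `G = 𝒢_t(x)`, `G' = 𝒢_t(x⁺)` and `Δ = ∇f(x) - ∇f(x⁺)`, and note that `x⁺` is the proximal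
point `p`. The optimality condition of the proximal problem (`IsProxPt.subgradient`) says that
`G - ∇f(x) ∈ ∂g(x⁺)` and `G' - ∇f(x⁺) ∈ ∂g(x⁺ - tG')`.

Since `f` is `1/t`-smooth and `μ`-strongly convex, the interpolation inequality (`interpolation`)
bounds `f(x) - f(x⁺)` below; adding the subgradient inequality for `g` at `x⁺`, tested at `x`,
gives exactly `φ(x) - φ(x⁺) ≥ (t/2)‖G‖² + (t/(2(1 - μt)))‖G - Δ‖²`.
Monotonicity of `∂g` between `x⁺` and `x⁺ - tG'` gives `‖G'‖² ≤ ⟨G - Δ, G'⟩`, hence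
`‖G'‖ ≤ ‖G - Δ‖`.
-/

/-- `g` is proper: somewhere finite and nowhere `⊥`. -/
def ProperFn {n : ℕ} (g : EuclideanSpace ℝ (Fin n) → EReal) : Prop :=
  (∃ x, g x ≠ ⊤) ∧ ∀ x, g x ≠ ⊥

/-- Convexity of an extended-real-valued function. -/
def ConvexFn {n : ℕ} (g : EuclideanSpace ℝ (Fin n) → EReal) : Prop :=
  ∀ a b : EuclideanSpace ℝ (Fin n), ∀ w : ℝ, 0 ≤ w → w ≤ 1 →
    g (w • a + (1 - w) • b) ≤ ((w : ℝ) : EReal) * g a + (((1 - w : ℝ)) : EReal) * g b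

/-- The composite objective `φ = f + g`. -/
noncomputable def phi {n : ℕ} (f : EuclideanSpace ℝ (Fin n) → ℝ)
    (g : EuclideanSpace ℝ (Fin n) → EReal) (y : EuclideanSpace ℝ (Fin n)) : EReal :=
  (f y : EReal) + g y

/-- `p = prox_{tg}(x)`, i.e. `p` minimizes `u ↦ t g(u) + (1/2)‖u - x‖²`. -/
def IsProxPt {n : ℕ} (g : EuclideanSpace ℝ (Fin n) → EReal) (t : ℝ)
    (x p : EuclideanSpace ℝ (Fin n)) : Prop :=
  ∀ u, (t : EReal) * g p + ((1 / 2 * ‖p - x‖ ^ 2 : ℝ) : EReal)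
    ≤ (t : EReal) * g u + ((1 / 2 * ‖u - x‖ ^ 2 : ℝ) : EReal)

section Aux

open scoped InnerProductSpace

variable {E : Type*} [NormedAddCommGroup E] [InnerProductSpace ℝ E] [CompleteSpace E]

/-- Derivative of the restriction of `f` to the line through `x` with direction `d`. -/
lemma hasDerivAt_line {f : E → ℝ} (hf : Differentiable ℝ f) (x d : E) (s : ℝ) :
    HasDerivAt (fun s : ℝ => f (x + s • d)) ⟪gradient f (x + s • d), d⟫_ℝ s := by
  have h1 := (hf (x + s • d)).hasGradientAt.hasFDerivAt
  have h2 : HasDerivAt (fun s : ℝ => x + s • d) d s := by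
    simpa using ((hasDerivAt_id s).smul_const d).const_add x
  exact (h1.comp_hasDerivAt s h2).congr_deriv (by simp)

/-- The descent lemma: a Lipschitz gradient gives a quadratic upper bound. -/
lemma descent_lemma {f : E → ℝ} {L : ℝ} (hf : Differentiable ℝ f)
    (hL : ∀ x y, ‖gradient f x - gradient f y‖ ≤ L * ‖x - y‖) (x d : E) :
    f (x + d) ≤ f x + ⟪gradient f x, d⟫_ℝ + L / 2 * ‖d‖ ^ 2 := by
  have hder : ∀ s : ℝ, HasDerivAt
      (fun s : ℝ => f (x + s • d) - (s * ⟪gradient f x, d⟫_ℝ + s ^ 2 * (L / 2 * ‖d‖ ^ 2)))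
      (⟪gradient f (x + s • d), d⟫_ℝ - (⟪gradient f x, d⟫_ℝ + s * (L * ‖d‖ ^ 2))) s := by
    intro s
    have h1 := (hasDerivAt_id s).mul_const ⟪gradient f x, d⟫_ℝ
    have h2 := (hasDerivAt_pow 2 s).mul_const (L / 2 * ‖d‖ ^ 2)
    refine ((hasDerivAt_line hf x d s).sub (h1.add h2)).congr_deriv ?_
    push_cast
    ring
  have hanti : AntitoneOn
      (fun s : ℝ => f (x + s • d) - (s * ⟪gradient f x, d⟫_ℝ + s ^ 2 * (L / 2 * ‖d‖ ^ 2)))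
      (Set.Icc 0 1) := by
    refine antitoneOn_of_deriv_nonpos (convex_Icc 0 1)
      (fun s _ => (hder s).continuousAt.continuousWithinAt)
      (fun s _ => (hder s).differentiableAt.differentiableWithinAt) ?_
    intro s hs
    rw [interior_Icc] at hs
    rw [(hder s).deriv]
    have h1 : ⟪gradient f (x + s • d) - gradient f x, d⟫_ℝ ≤ s * (L * ‖d‖ ^ 2) := by
      calc ⟪gradient f (x + s • d) - gradient f x, d⟫_ℝ
          ≤ ‖gradient f (x + s • d) - gradient f x‖ * ‖d‖ := real_inner_le_norm _ _
        _ ≤ L * ‖x + s • d - x‖ * ‖d‖ := by gcongr; exact hL _ _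
        _ = s * (L * ‖d‖ ^ 2) := by
          rw [add_sub_cancel_left, norm_smul, Real.norm_of_nonneg hs.1.le]; ring
    rw [inner_sub_left] at h1
    linarith
  have := hanti (Set.left_mem_Icc.2 zero_le_one) (Set.right_mem_Icc.2 zero_le_one) zero_le_one
  simp only [zero_smul, one_smul, add_zero] at this
  linarith

/-- First-order characterization of `μ`-strong convexity. -/
lemma strongly_convex_lower_bound {f : E → ℝ} {μ : ℝ} (hf : Differentiable ℝ f)
    (hsc : ConvexOn ℝ Set.univ (fun y => f y - μ / 2 * ‖y‖ ^ 2)) (x d : E) :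
    f x + ⟪gradient f x, d⟫_ℝ + μ / 2 * ‖d‖ ^ 2 ≤ f (x + d) := by
  have hline : ConvexOn ℝ Set.univ
      (fun s : ℝ => f (x + s • d) - μ / 2 * ‖x + s • d‖ ^ 2) := by
    have := hsc.comp_affineMap (AffineMap.lineMap x (x + d))
    simpa [Function.comp_def, AffineMap.lineMap_apply, add_comm] using this
  have hder : HasDerivAt (fun s : ℝ => f (x + s • d) - μ / 2 * ‖x + s • d‖ ^ 2)
      (⟪gradient f x, d⟫_ℝ - μ * ⟪x, d⟫_ℝ) 0 := by
    have h1 := hasDerivAt_line hf x d 0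
    have h2 : HasDerivAt (fun s : ℝ => x + s • d) d 0 := by
      simpa using ((hasDerivAt_id (0 : ℝ)).smul_const d).const_add x
    refine (h1.sub (h2.norm_sq.const_mul (μ / 2))).congr_deriv ?_
    simp only [zero_smul, add_zero]
    ring
  have h := hline.le_slope_of_hasDerivAt (Set.mem_univ 0) (Set.mem_univ 1) zero_lt_one hder
  have hn := norm_add_sq_real x d
  simp only [slope_def_field, zero_smul, one_smul, add_zero, sub_zero, div_one, hn] at h
  linarith

/-- The interpolation inequality for functions that are `μ`-strongly convex and `K`-smooth.
It is the cocoercivity of the gradient of the convex function `f - (μ/2)‖·‖²`, expanded. -/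
lemma interpolation {f : E → ℝ} {μ K : ℝ} (hμK : μ < K) (hf : Differentiable ℝ f)
    (hK : ∀ x y, ‖gradient f x - gradient f y‖ ≤ K * ‖x - y‖)
    (hsc : ConvexOn ℝ Set.univ (fun y => f y - μ / 2 * ‖y‖ ^ 2)) (p d : E) :
    f p + ⟪gradient f p, d⟫_ℝ + μ / 2 * ‖d‖ ^ 2
      + 1 / (2 * (K - μ)) * ‖gradient f (p + d) - gradient f p - μ • d‖ ^ 2 ≤ f (p + d) := by
  have hM : 0 < K - μ := sub_pos.2 hμK
  set e := gradient f (p + d) - gradient f p - μ • d with he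
  -- Compare at the minimizer over `z` of the quadratic upper bound at `p + d` minus the
  -- quadratic lower bound at `p`.
  have hup := descent_lemma hf hK (p + d) (-(K - μ)⁻¹ • e)
  have hlo := strongly_convex_lower_bound hf hsc p (d + -(K - μ)⁻¹ • e)
  rw [← add_assoc] at hlo
  have hg : gradient f (p + d) = e + gradient f p + μ • d := by rw [he]; abel
  rw [hg, norm_smul, mul_pow, inner_smul_right, inner_add_left, inner_add_left,
    real_inner_self_eq_norm_sq, inner_smul_left] at hup
  rw [inner_add_right, inner_smul_right, norm_add_sq_real, norm_smul, mul_pow,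
    inner_smul_right] at hlo
  simp only [Real.norm_eq_abs, sq_abs, conj_trivial] at hup hlo
  have hid : 1 / (2 * (K - μ)) * ‖e‖ ^ 2
      = (K - μ)⁻¹ * ‖e‖ ^ 2 - (K - μ) / 2 * ((-(K - μ)⁻¹) ^ 2 * ‖e‖ ^ 2) := by
    field_simp
    ring
  rw [hid]
  linarith

end Aux

section Prox

open scoped InnerProductSpace

variable {n : ℕ} {g : EuclideanSpace ℝ (Fin n) → EReal} {t : ℝ}
  {v p : EuclideanSpace ℝ (Fin n)}

lemma IsProxPt.ne_top (ht : 0 < t) (hg : ProperFn g) (hp : IsProxPt g t v p) : g p ≠ ⊤ := by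
  intro h
  obtain ⟨u, hu⟩ := hg.1
  have hb := hp u
  lift g u to ℝ using ⟨hu, hg.2 u⟩ with r
  rw [h, EReal.coe_mul_top_of_pos ht, EReal.top_add_coe, top_le_iff] at hb
  exact absurd hb (by exact_mod_cast EReal.coe_ne_top _)

/-- Optimality condition of the proximal problem: `t⁻¹ (v - p)` is a subgradient of `g` at
`p = prox_{tg}(v)`. -/
lemma IsProxPt.subgradient (ht : 0 < t) (hconv : ConvexFn g) (hp : IsProxPt g t v p)
    {a b : ℝ} {u : EuclideanSpace ℝ (Fin n)} (ha : g p = a) (hb : g u = b) :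
    t * a + ⟪v - p, u - p⟫_ℝ ≤ t * b := by
  -- Compare `p` with points of the segment from `p` to `u` and let the weight tend to `0`.
  have key : ∀ w : ℝ, 0 < w → w ≤ 1 →
      0 ≤ t * (b - a) - ⟪v - p, u - p⟫_ℝ + w * (1 / 2 * ‖u - p‖ ^ 2) := by
    intro w hw0 hw1
    have h1 := hp (w • u + (1 - w) • p)
    have h2 := hconv u p w hw0.le hw1
    rw [ha, hb] at h2
    have h3 : (t : EReal) * g (w • u + (1 - w) • p) ≤ (t : EReal) * ((w * b + (1 - w) * a : ℝ)) :=
      mul_le_mul_of_nonneg_left (by exact_mod_cast h2) (by exact_mod_cast ht.le)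
    have h4 := h1.trans (add_le_add_left h3 _)
    rw [ha] at h4
    have h5 : t * a + 1 / 2 * ‖p - v‖ ^ 2 ≤ t * (w * b + (1 - w) * a)
        + 1 / 2 * ‖w • u + (1 - w) • p - v‖ ^ 2 := by exact_mod_cast h4
    have h6 : w • u + (1 - w) • p - v = w • (u - p) - (v - p) := by module
    rw [h6, norm_sub_rev p v, norm_sub_sq_real (w • (u - p)), norm_smul, mul_pow,
      Real.norm_eq_abs, sq_abs, inner_smul_left, conj_trivial,
      real_inner_comm (v - p) (u - p)] at h5
    have h7 : 0 ≤ w * (t * (b - a) - ⟪v - p, u - p⟫_ℝ + w * (1 / 2 * ‖u - p‖ ^ 2)) := by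
      linarith
    exact nonneg_of_mul_nonneg_right h7 hw0
  have hlim : Filter.Tendsto
      (fun w : ℝ => t * (b - a) - ⟪v - p, u - p⟫_ℝ + w * (1 / 2 * ‖u - p‖ ^ 2))
      (nhdsWithin 0 (Set.Ioi 0)) (nhds (t * (b - a) - ⟪v - p, u - p⟫_ℝ)) := by
    have hc : Continuous
        (fun w : ℝ => t * (b - a) - ⟪v - p, u - p⟫_ℝ + w * (1 / 2 * ‖u - p‖ ^ 2)) := by fun_prop
    simpa using (hc.tendsto 0).mono_left nhdsWithin_le_nhds
  have h0 := ge_of_tendsto hlim (b := 0) (by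
    filter_upwards [Ioc_mem_nhdsGT (zero_lt_one' ℝ)] with w hw using key w hw.1 hw.2)
  linarith

end Prox

/-- refined sufficient decrease property of the proximal gradient
method in the strongly convex case:
`φ(x) ≥ φ(x⁺) + (t/2)‖𝒢ₜ(x)‖² + (t/(2(1-μt)))‖𝒢ₜ(x⁺)‖²`. -/
theorem refined_sufficient_decrease_strongly_convex {n : ℕ}
    (f : EuclideanSpace ℝ (Fin n) → ℝ) (g : EuclideanSpace ℝ (Fin n) → EReal)
    (L μ t : ℝ) (hμ : 0 < μ) (hμL : μ ≤ L) (ht : 0 < t) (htL : t ≤ 1 / L)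
    (hμt : μ * t < 1)
    (hf : Differentiable ℝ f)
    (hsmooth : ∀ x y, ‖gradient f x - gradient f y‖ ≤ L * ‖x - y‖)
    (hsc : ConvexOn ℝ Set.univ (fun y => f y - μ / 2 * ‖y‖ ^ 2))
    (hproper : ProperFn g) (hclosed : LowerSemicontinuous g) (hgconv : ConvexFn g)
    (x xp p q Gx Gxp : EuclideanSpace ℝ (Fin n))
    (hp : IsProxPt g t (x - t • gradient f x) p)
    (hGx : Gx = t⁻¹ • (x - p))
    (hxp : xp = x - t • Gx)
    (hq : IsProxPt g t (xp - t • gradient f xp) q)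
    (hGxp : Gxp = t⁻¹ • (xp - q)) :
    phi f g xp +
        ((t / 2 * ‖Gx‖ ^ 2 + t / (2 * (1 - μ * t)) * ‖Gxp‖ ^ 2 : ℝ) : EReal)
      ≤ phi f g x := by
  have hxp' : xp = p := by
    rw [hxp, hGx, smul_inv_smul₀ ht.ne']; abel
  subst hxp'
  have hpt := hp.ne_top ht hproper
  have hqt := hq.ne_top ht hproper
  unfold phi
  by_cases hx : g x = ⊤
  · rw [hx, EReal.coe_add_top]; exact le_top
  obtain ⟨a, ha⟩ : ∃ a : ℝ, g xp = a := ⟨_, (EReal.coe_toReal hpt (hproper.2 _)).symm⟩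
  obtain ⟨b, hb⟩ : ∃ b : ℝ, g x = b := ⟨_, (EReal.coe_toReal hx (hproper.2 _)).symm⟩
  obtain ⟨c, hc⟩ : ∃ c : ℝ, g q = c := ⟨_, (EReal.coe_toReal hqt (hproper.2 _)).symm⟩
  have hL : 0 < L := hμ.trans_le hμL
  have hLt : L ≤ 1 / t := by
    rw [le_div_iff₀ ht]; rw [le_div_iff₀ hL] at htL; linarith
  have hμt' : μ < 1 / t := by rwa [lt_div_iff₀ ht]
  have hK : ∀ x y, ‖gradient f x - gradient f y‖ ≤ 1 / t * ‖x - y‖ := fun x y =>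
    (hsmooth x y).trans (by gcongr)
  -- Interpolation with `L` relaxed to `1/t`: for this constant the quadratic terms in `Gx` and
  -- `Δ` add up to the multiple of `‖Gx - Δ‖ ^ 2` required in `hkey`.
  have hint := interpolation hμt' hf hK hsc xp (t • Gx)
  rw [show xp + t • Gx = x by rw [hxp]; abel] at hint
  have hs1 := hp.subgradient ht hgconv ha hb
  have hs2 := hp.subgradient ht hgconv ha hc
  have hs3 := hq.subgradient ht hgconv hc ha
  set Δ := gradient f x - gradient f xp with hΔ
  have hx' : x = xp + t • Gx := by rw [hxp]; abel
  have hq' : q = xp - t • Gxp := by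
    rw [hGxp, smul_inv_smul₀ ht.ne']; abel
  have hgx : gradient f x = Δ + gradient f xp := by rw [hΔ]; abel
  clear_value Δ
  rw [hgx] at hs1 hs2
  generalize gradient f xp = D at *
  have e1 : x - t • (Δ + D) - xp = t • (Gx - Δ - D) := by rw [hx']; module
  have e2 : q - xp = -(t • Gxp) := by rw [hq']; abel
  have e3 : xp - t • D - q = t • (Gxp - D) := by rw [hq']; module
  have e4 : xp - q = t • Gxp := by rw [hq']; abel
  have e5 : x - xp = t • Gx := by rw [hx']; abel
  rw [e1, e5] at hs1
  rw [e1, e2] at hs2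
  rw [e3, e4] at hs3
  simp only [inner_neg_right, inner_smul_left, inner_smul_right, conj_trivial, inner_sub_left,
    real_inner_self_eq_norm_sq] at hs1 hs2 hs3 hint
  -- Monotonicity of the subdifferential of `g` between `xp` and `q`.
  have hG' : ‖Gxp‖ ^ 2 ≤ inner ℝ (Gx - Δ) Gxp := by
    rw [inner_sub_left]
    have : 0 ≤ t * t * (inner ℝ Gx Gxp - inner ℝ Δ Gxp - ‖Gxp‖ ^ 2) := by linarith
    linarith [nonneg_of_mul_nonneg_right this (mul_pos ht ht)]
  have hG2 : ‖Gxp‖ ^ 2 ≤ ‖Gx - Δ‖ ^ 2 := by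
    have := norm_sub_sq_real (Gx - Δ) Gxp
    nlinarith [sq_nonneg ‖Gx - Δ - Gxp‖]
  have hpos : 0 < 1 - μ * t := by linarith
  have hG3 : t / (2 * (1 - μ * t)) * ‖Gxp‖ ^ 2 ≤ t / (2 * (1 - μ * t)) * ‖Gx - Δ‖ ^ 2 := by
    gcongr
  have hs1' : a + t * (‖Gx‖ ^ 2 - inner ℝ Δ Gx - inner ℝ D Gx) ≤ b := by
    have : 0 ≤ t * (b - (a + t * (‖Gx‖ ^ 2 - inner ℝ Δ Gx - inner ℝ D Gx))) := by linarith
    linarith [nonneg_of_mul_nonneg_right this ht]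
  have hkey : t * ‖Gx‖ ^ 2 - t * inner ℝ Δ Gx + μ / 2 * ‖t • Gx‖ ^ 2
      + 1 / (2 * (1 / t - μ)) * ‖Δ - μ • t • Gx‖ ^ 2
      = t / 2 * ‖Gx‖ ^ 2 + t / (2 * (1 - μ * t)) * ‖Gx - Δ‖ ^ 2 := by
    have h1 : 1 / (2 * (1 / t - μ)) = t / (2 * (1 - μ * t)) := by
      have : 1 / t - μ = (1 - μ * t) / t := by field_simp
      rw [this]; field_simp
    rw [h1, norm_sub_sq_real, norm_sub_sq_real, smul_smul, norm_smul, norm_smul, mul_pow, mul_pow,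
      inner_smul_right, real_inner_comm Δ Gx]
    simp only [Real.norm_eq_abs, sq_abs]
    have hne : 1 - t * μ ≠ 0 := by rw [mul_comm]; exact hpos.ne'
    field_simp
    ring
  rw [ha, hb]
  norm_cast
  linarith
end

section
/- Let f : ℝ^n → ℝ be L-smooth and convex, attaining its minimum value min f, and suppose f satisfies the Polyak–Łojasiewicz inequality with constant η > 0: (1/2)‖∇f(x)‖² ≥ η (f(x) − min f) for all x. Let 0 < t ≤ 1/L and x⁺ = x − t∇f(x). Then f(x⁺) − min f ≤ ((1 − ηt)/(1 + ηt)) (f(x) − min f). -/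
/-!
By co-coercivity of the gradient, a convex `L`-smooth function with `t ≤ 1 / L` satisfies
`f y + ⟪∇f y, x - y⟫ + t / 2 * ‖∇f x - ∇f y‖² ≤ f x` (`cocoercive_lower_bound`). Taking `y = x⁺`
gives `x - y = t ∇f x`, the cross terms cancel, and what remains is
`f x - f x⁺ ≥ t / 2 * (‖∇f x‖² + ‖∇f x⁺‖²)`. Applying the Polyak–Łojasiewicz inequality at both
points yields `f x - f x⁺ ≥ η t ((f x - min f) + (f x⁺ - min f))`, which rearranges to the claim.
-/

section

variable {E : Type*} [NormedAddCommGroup E] [InnerProductSpace ℝ E] [CompleteSpace E]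

lemma hasDerivAt_along_line {f : E → ℝ} (hf : Differentiable ℝ f) (x v : E) (s : ℝ) :
    HasDerivAt (fun s : ℝ => f (x + s • v)) (inner ℝ (gradient f (x + s • v)) v) s := by
  have h1 := (hf (x + s • v)).hasGradientAt.hasFDerivAt
  have h2 : HasDerivAt (fun s : ℝ => x + s • v) v s := by
    simpa using ((hasDerivAt_id s).smul_const v).const_add x
  exact h1.comp_hasDerivAt s h2

/-- The descent lemma: `f` lies below its quadratic upper model. -/
lemma le_quadratic_model {f : E → ℝ} {L : ℝ} (hf : Differentiable ℝ f)
    (hsmooth : ∀ x y, ‖gradient f x - gradient f y‖ ≤ L * ‖x - y‖) (x v : E) :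
    f (x + v) ≤ f x + inner ℝ (gradient f x) v + L / 2 * ‖v‖ ^ 2 := by
  -- The gap between `f` and its model along the segment from `x` to `x + v`; it decreases because
  -- `⟪∇f (x + s v) - ∇f x, v⟫ ≤ s L ‖v‖²`.
  let φ : ℝ → ℝ := fun s =>
    f (x + s • v) - s * inner ℝ (gradient f x) v - s ^ 2 * (L / 2 * ‖v‖ ^ 2)
  have hφ : ∀ s, HasDerivAt φ (inner ℝ (gradient f (x + s • v)) v
      - inner ℝ (gradient f x) v - 2 * s * (L / 2 * ‖v‖ ^ 2)) s := by
    intro s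
    have h1 := (hasDerivAt_id s).mul_const (inner ℝ (gradient f x) v)
    have h2 := (hasDerivAt_pow 2 s).mul_const (L / 2 * ‖v‖ ^ 2)
    convert! ((hasDerivAt_along_line hf x v s).sub h1).sub h2 using 1
    simp
  have hanti : AntitoneOn φ (Set.Icc 0 1) := by
    refine antitoneOn_of_deriv_nonpos (convex_Icc 0 1)
      (fun s _ => (hφ s).continuousAt.continuousWithinAt)
      (fun s _ => (hφ s).differentiableAt.differentiableWithinAt) ?_
    intro s hs
    rw [interior_Icc] at hs
    rw [(hφ s).deriv, ← inner_sub_left]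
    have h1 := real_inner_le_norm (gradient f (x + s • v) - gradient f x) v
    have h2 := hsmooth (x + s • v) x
    rw [add_sub_cancel_left, norm_smul, Real.norm_of_nonneg hs.1.le] at h2
    nlinarith [mul_le_mul_of_nonneg_right h2 (norm_nonneg v)]
  have h := hanti (Set.left_mem_Icc.2 zero_le_one) (Set.right_mem_Icc.2 zero_le_one) zero_le_one
  simp only [φ, one_smul, zero_smul, add_zero] at h
  linarith

/-- A differentiable convex function lies above its tangent hyperplanes. -/
lemma tangent_le_of_convex {f : E → ℝ} (hf : Differentiable ℝ f)
    (hconv : ConvexOn ℝ Set.univ f) (y z : E) :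
    f y + inner ℝ (gradient f y) (z - y) ≤ f z := by
  have hline : ConvexOn ℝ Set.univ (fun s : ℝ => f (y + s • (z - y))) := by
    refine ⟨convex_univ, fun a _ b _ p q hp hq hpq => ?_⟩
    have h := hconv.2 (Set.mem_univ (y + a • (z - y))) (Set.mem_univ (y + b • (z - y))) hp hq hpq
    convert h using 2
    have : p • y + q • y = y := by rw [← add_smul, hpq, one_smul]
    simp only [smul_eq_mul]
    nth_rewrite 1 [← this]
    module
  have hd := hasDerivAt_along_line hf y (z - y) 0
  have h := hline.le_slope_of_hasDerivAt (Set.mem_univ 0) (Set.mem_univ 1) zero_lt_one hd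
  simp only [slope_def_field, zero_smul, add_zero, one_smul, add_sub_cancel, sub_zero, div_one] at h
  linarith

/-- The tangent lower bound of a convex function, strengthened by smoothness: the descent lemma at
`x` and the tangent inequality at `y` are compared at the point `x - t (∇f x - ∇f y)`. -/
lemma cocoercive_lower_bound {f : E → ℝ} {L t : ℝ} (hL : 0 < L) (ht : 0 < t) (htL : t ≤ 1 / L)
    (hf : Differentiable ℝ f)
    (hsmooth : ∀ x y, ‖gradient f x - gradient f y‖ ≤ L * ‖x - y‖)
    (hconv : ConvexOn ℝ Set.univ f) (x y : E) :
    f y + inner ℝ (gradient f y) (x - y) + t / 2 * ‖gradient f x - gradient f y‖ ^ 2 ≤ f x := by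
  set d := gradient f x - gradient f y with hd
  have h1 := le_quadratic_model hf hsmooth x (-(t • d))
  have h2 := tangent_le_of_convex hf hconv y (x + -(t • d))
  have hdd : inner ℝ (gradient f x) d - inner ℝ (gradient f y) d = ‖d‖ ^ 2 := by
    rw [← inner_sub_left, ← hd, real_inner_self_eq_norm_sq]
  have e : x + -(t • d) - y = (x - y) - t • d := by abel
  rw [e, inner_sub_right, inner_smul_right] at h2
  rw [inner_neg_right, inner_smul_right, norm_neg, norm_smul, Real.norm_of_nonneg ht.le] at h1
  have hLt : t * L ≤ 1 := (le_div_iff₀ hL).1 htL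
  have h3 : L / 2 * (t * ‖d‖) ^ 2 ≤ t / 2 * ‖d‖ ^ 2 := by
    have := mul_le_mul_of_nonneg_right hLt (by positivity : 0 ≤ t / 2 * ‖d‖ ^ 2)
    linarith
  have h4 : t * (_ - _) = t * _ := congrArg (t * ·) hdd
  linarith

end

/-- improved linear rate of gradient descent under the
Polyak–Łojasiewicz inequality, for any step size `0 < t ≤ 1/L`. -/
theorem pl_linear_rate {n : ℕ}
    (f : EuclideanSpace ℝ (Fin n) → ℝ)
    (L t η fmin : ℝ) (hL : 0 < L) (ht : 0 < t) (htL : t ≤ 1 / L) (hη : 0 < η)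
    (hf : Differentiable ℝ f)
    (hsmooth : ∀ x y, ‖gradient f x - gradient f y‖ ≤ L * ‖x - y‖)
    (hconv : ConvexOn ℝ Set.univ f)
    (hmin : IsLeast (Set.range f) fmin)
    (hPL : ∀ x, η * (f x - fmin) ≤ 1 / 2 * ‖gradient f x‖ ^ 2)
    (x xp : EuclideanSpace ℝ (Fin n))
    (hxp : xp = x - t • gradient f x) :
    f xp - fmin ≤ (1 - η * t) / (1 + η * t) * (f x - fmin) := by
  have h := cocoercive_lower_bound hL ht htL hf hsmooth hconv x xp
  have e : x - xp = t • gradient f x := by rw [hxp]; abel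
  rw [e, inner_smul_right, norm_sub_sq_real, real_inner_comm] at h
  have h1 := mul_le_mul_of_nonneg_left (hPL x) ht.le
  have h2 := mul_le_mul_of_nonneg_left (hPL xp) ht.le
  rw [div_mul_eq_mul_div, le_div_iff₀ (by positivity)]
  linarith
end
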